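/- arXiv:math/0606626 — 2 statements merged into one kernel-verified Lean document; each statement's English description precedes it below -/
import Mathlib

section
/- Let (X, μ) be a measure space, let m₀ ≥ 1 and m ≥ m₀ be natural numbers, let K : ℕ → X → [0, ∞] be a sequence of measurable functions such that each K_k is almost everywhere positive and almost everywhere finite, and let c : ℕ → [0, ∞]. Suppose that for every k with m₀ < k ≤ m one has ∫ (K_k / K_{k-1}) dμ = c_k. Then ∫ K_m^{1/m} dμ ≤ (∏_{k=m₀+1}^{m} c_k)^{1/m} · (∫ K_{m₀}^{1/m₀} dμ)^{m₀/m}. -/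
open MeasureTheory
open scoped ENNReal

/-!
Almost everywhere `K m = K m₀ * ∏ k ∈ Icc (m₀ + 1) m, K k / K (k - 1)`. Taking `1 / m`-th powers,
the weight of each ratio is `1 / m` and the weight of `K m₀ ^ (1 / m₀)` is `m₀ / m`. These weights
add up to `1`, so Hölder's inequality for several factors, applied once, replaces the iteration of
the two-factor inequality.
-/

theorem mul_prod_Icc_div_pred {a : ℕ → ℝ≥0∞} {m₀ m : ℕ} (hm : m₀ ≤ m)
    (ha_zero : ∀ k ∈ Finset.Ico m₀ m, a k ≠ 0) (ha_top : ∀ k ∈ Finset.Ico m₀ m, a k ≠ ∞) :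
    a m₀ * ∏ k ∈ Finset.Icc (m₀ + 1) m, a k / a (k - 1) = a m := by
  induction m, hm using Nat.le_induction with
  | base => simp
  | succ m hm ih =>
    have hsub : Finset.Ico m₀ m ⊆ Finset.Ico m₀ (m + 1) := Finset.Ico_subset_Ico_right m.le_succ
    have hmem : m ∈ Finset.Ico m₀ (m + 1) := Finset.mem_Ico.2 ⟨hm, m.lt_succ_self⟩
    rw [Finset.prod_Icc_succ_top (by omega), ← mul_assoc,
      ih (fun k hk ↦ ha_zero k (hsub hk)) (fun k hk ↦ ha_top k (hsub hk)), Nat.add_sub_cancel,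
      ENNReal.mul_div_cancel (ha_zero m hmem) (ha_top m hmem)]

section

variable {X : Type*} [MeasurableSpace X] {μ : Measure X}

theorem lintegral_mul_prod_rpow_one_div_add_card_le {ι : Type*} (s : Finset ι) {g : X → ℝ≥0∞}
    {f : ι → X → ℝ≥0∞} (hg : AEMeasurable g μ) (hf : ∀ i ∈ s, AEMeasurable (f i) μ)
    {t : ℝ} (ht : 0 < t) :
    ∫⁻ x, (g x * ∏ i ∈ s, f i x) ^ (1 / (t + s.card)) ∂μ ≤
      (∏ i ∈ s, ∫⁻ x, f i x ∂μ) ^ (1 / (t + s.card)) *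
        (∫⁻ x, g x ^ (1 / t) ∂μ) ^ (t / (t + s.card)) := by
  have hweight : 0 ≤ 1 / (t + s.card) := by positivity
  have hsum : t / (t + s.card) + ∑ _i ∈ s, 1 / (t + s.card) = 1 := by
    rw [Finset.sum_const, nsmul_eq_mul]
    field_simp
  have hsplit (x : X) : (g x * ∏ i ∈ s, f i x) ^ (1 / (t + s.card)) =
      (g x ^ (1 / t)) ^ (t / (t + s.card)) * ∏ i ∈ s, f i x ^ (1 / (t + s.card)) := by
    rw [ENNReal.mul_rpow_of_nonneg _ _ hweight, ENNReal.prod_rpow_of_nonneg hweight,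
      ← ENNReal.rpow_mul, div_mul_div_cancel₀ ht.ne']
  calc
    ∫⁻ x, (g x * ∏ i ∈ s, f i x) ^ (1 / (t + s.card)) ∂μ
      = ∫⁻ x, (g x ^ (1 / t)) ^ (t / (t + s.card)) *
          ∏ i ∈ s, f i x ^ (1 / (t + s.card)) ∂μ := lintegral_congr hsplit
    _ ≤ (∫⁻ x, g x ^ (1 / t) ∂μ) ^ (t / (t + s.card)) *
          ∏ i ∈ s, (∫⁻ x, f i x ∂μ) ^ (1 / (t + s.card)) :=
        ENNReal.lintegral_mul_prod_norm_pow_le s (hg.pow_const _) hf _ hsum (by positivity)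
          fun _ _ ↦ hweight
    _ = (∏ i ∈ s, ∫⁻ x, f i x ∂μ) ^ (1 / (t + s.card)) *
          (∫⁻ x, g x ^ (1 / t) ∂μ) ^ (t / (t + s.card)) := by
        rw [ENNReal.prod_rpow_of_nonneg hweight, mul_comm]

theorem stmt_1_general {m₀ m : ℕ} (hm : m₀ ≤ m) {t : ℝ} (ht : 0 < t) {K : ℕ → X → ℝ≥0∞}
    (hK_meas : ∀ k ∈ Finset.Icc m₀ m, AEMeasurable (K k) μ)
    (hK_pos : ∀ k ∈ Finset.Ico m₀ m, ∀ᵐ x ∂μ, 0 < K k x)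
    (hK_fin : ∀ k ∈ Finset.Ico m₀ m, ∀ᵐ x ∂μ, K k x < ∞) :
    ∫⁻ x, K m x ^ (1 / (t + (m - m₀))) ∂μ ≤
      (∏ k ∈ Finset.Icc (m₀ + 1) m, ∫⁻ x, K k x / K (k - 1) x ∂μ) ^ (1 / (t + (m - m₀))) *
        (∫⁻ x, K m₀ x ^ (1 / t) ∂μ) ^ (t / (t + (m - m₀))) := by
  have htelescope : ∀ᵐ x ∂μ,
      K m₀ x * ∏ k ∈ Finset.Icc (m₀ + 1) m, K k x / K (k - 1) x = K m x := by
    filter_upwards [(Filter.eventually_all_finset _).2 hK_pos,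
      (Filter.eventually_all_finset _).2 hK_fin] with x hpos hfin
    exact mul_prod_Icc_div_pred (a := (K · x)) hm (fun k hk ↦ (hpos k hk).ne')
      fun k hk ↦ (hfin k hk).ne
  have hratio_meas : ∀ k ∈ Finset.Icc (m₀ + 1) m,
      AEMeasurable (fun x ↦ K k x / K (k - 1) x) μ := by
    intro k hk
    rw [Finset.mem_Icc] at hk
    exact (hK_meas k (Finset.mem_Icc.2 (by omega))).div
      (hK_meas (k - 1) (Finset.mem_Icc.2 (by omega)))
  have hcard : ((Finset.Icc (m₀ + 1) m).card : ℝ) = m - m₀ := by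
    rw [Nat.card_Icc, Nat.add_sub_add_right, Nat.cast_sub hm]
  rw [← hcard, ← lintegral_congr_ae (htelescope.mono fun x hx ↦ congrArg (· ^ _) hx)]
  exact lintegral_mul_prod_rpow_one_div_add_card_le _
    (hK_meas m₀ (Finset.left_mem_Icc.2 hm)) hratio_meas ht

end

/-- Measure-theoretic content of Lemma 4.2 of Tsuji's "Dynamical construction of
Kähler-Einstein metrics": iterating Hölder's inequality along the dynamical system of
Bergman kernels gives
`∫ K_m^(1/m) ≤ (∏_{k=m₀+1}^m c_k)^(1/m) · (∫ K_{m₀}^(1/m₀))^(m₀/m)`. -/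
theorem stmt_1 {X : Type*} [MeasurableSpace X] (μ : Measure X) (m₀ m : ℕ)
    (hm₀ : 1 ≤ m₀) (hm : m₀ ≤ m) (K : ℕ → X → ℝ≥0∞) (c : ℕ → ℝ≥0∞)
    (hK_meas : ∀ k, Measurable (K k))
    (hK_pos : ∀ k, ∀ᵐ x ∂μ, 0 < K k x)
    (hK_fin : ∀ k, ∀ᵐ x ∂μ, K k x < ⊤)
    (hc : ∀ k, m₀ < k → k ≤ m → ∫⁻ x, K k x / K (k - 1) x ∂μ = c k) :
    ∫⁻ x, (K m x) ^ ((1 : ℝ) / m) ∂μ ≤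
      (∏ k ∈ Finset.Icc (m₀ + 1) m, c k) ^ ((1 : ℝ) / m) *
        (∫⁻ x, (K m₀ x) ^ ((1 : ℝ) / m₀) ∂μ) ^ ((m₀ : ℝ) / m) := by
  rw [← Finset.prod_congr rfl fun k hk ↦ hc k (Finset.mem_Icc.1 hk).1 (Finset.mem_Icc.1 hk).2]
  simpa only [add_sub_cancel] using stmt_1_general hm (Nat.cast_pos.2 hm₀ : (0 : ℝ) < m₀)
    (fun k _ ↦ (hK_meas k).aemeasurable) (fun k _ ↦ hK_pos k) fun k _ ↦ hK_fin k
end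

section
/- Let (X, μ) be a measure space, let n and m₀ ≥ 1 be natural numbers, let K : ℕ → X → [0, ∞] be a sequence of measurable functions such that each K_k is almost everywhere positive and almost everywhere finite, and let c : ℕ → ℝ with c_k > 0. Suppose: (i) for every k > m₀ one has ∫ (K_k / K_{k-1}) dμ = c_k; (ii) ∫ K_{m₀}^{1/m₀} dμ < ∞; and (iii) c_k / k^n converges to a real number V > 0 as k → ∞. Then limsup_{m → ∞} (m!)^{-n/m} · ∫ K_m^{1/m} dμ ≤ V. -/
open MeasureTheory Filter
open scoped ENNReal

/-!
Let `I_m = ∫ K_m ^ (1/m)`. Hölder's inequality applied to `K_{m+1} = (K_{m+1} / K_m) * K_m` gives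
`I_{m+1} ^ (m+1) ≤ c_{m+1} * I_m ^ m`. Hence `a_m = I_m ^ m / (m!) ^ n` satisfies
`a_{m+1} ≤ c_{m+1} / (m+1) ^ n * a_m`, and the root test bounds the upper limit of
`a_m ^ (1/m) = (m!) ^ (-n/m) * I_m` by that of `c_m / m ^ n`.
-/

section RootTest

open ExpGrowth

variable {a w : ℕ → ℝ≥0∞} {b : ℝ≥0∞}

theorem log_limsup_rpow_one_div :
    ENNReal.log (limsup (fun m : ℕ => a m ^ ((1 : ℝ) / m)) atTop) = expGrowthSup a := by
  rw [← ENNReal.logOrderIso_apply, OrderIso.limsup_apply]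
  refine congrArg (limsup · atTop) (funext fun m => ?_)
  rw [ENNReal.logOrderIso_apply, ENNReal.log_rpow, EReal.div_eq_inv_mul, one_div, EReal.coe_inv,
    EReal.coe_natCast]

theorem le_div_pow_mul_pow_of_succ_le_mul {N : ℕ} (hb₀ : b ≠ 0) (hb : b ≠ ⊤)
    (h : ∀ m, N ≤ m → a (m + 1) ≤ b * a m) {m : ℕ} (hm : N ≤ m) :
    a m ≤ a N / b ^ N * b ^ m := by
  induction m, hm using Nat.le_induction with
  | base => rw [ENNReal.div_mul_cancel (pow_ne_zero _ hb₀) (ENNReal.pow_ne_top hb)]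
  | succ m hm ih =>
    calc a (m + 1) ≤ b * a m := h m hm
      _ ≤ b * (a N / b ^ N * b ^ m) := by gcongr
      _ = a N / b ^ N * b ^ (m + 1) := by ring

theorem limsup_rpow_one_div_le_limsup_of_succ_le_mul (ha : ∃ᶠ m in atTop, a m ≠ ⊤)
    (h : ∀ᶠ m in atTop, a (m + 1) ≤ w (m + 1) * a m) :
    limsup (fun m : ℕ => a m ^ ((1 : ℝ) / m)) atTop ≤ limsup w atTop := by
  refine le_of_forall_gt_imp_ge_of_dense fun b hb => ?_
  rcases eq_or_ne b ⊤ with rfl | hb_top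
  · exact le_top
  have hb₀ : b ≠ 0 := ne_bot_of_gt hb
  have hw : ∀ᶠ m in atTop, w (m + 1) < b :=
    (tendsto_add_atTop_nat 1).eventually (eventually_lt_of_limsup_lt hb)
  have hab : ∀ᶠ m in atTop, a (m + 1) ≤ b * a m := by
    filter_upwards [h, hw] with m hm hwm
    exact hm.trans (by gcongr)
  obtain ⟨M, hM⟩ := eventually_atTop.1 hab
  obtain ⟨N, hMN, haN⟩ := frequently_atTop.1 ha M
  have hD : a N / b ^ N ≠ ⊤ := ENNReal.div_ne_top haN (pow_ne_zero _ hb₀)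
  rw [← ENNReal.log_le_log_iff, log_limsup_rpow_one_div, ← expGrowthSup_pow]
  exact expGrowthSup_le_of_eventually_le hD <| (eventually_ge_atTop N).mono fun m hm =>
    le_div_pow_mul_pow_of_succ_le_mul hb₀ hb_top (fun k hk => hM k (hMN.trans hk)) hm

end RootTest

theorem natCast_rpow_ne_zero {k : ℕ} (hk : k ≠ 0) (s : ℝ) : (k : ℝ≥0∞) ^ s ≠ 0 :=
  (ENNReal.rpow_pos (by positivity) (ENNReal.natCast_ne_top k)).ne'

theorem div_factorial_succ_rpow_le {x y d : ℝ≥0∞} {m : ℕ} (h : x ≤ d * y) (s : ℝ) :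
    x / ((m + 1).factorial : ℝ≥0∞) ^ s ≤
      d / ((m + 1 : ℕ) : ℝ≥0∞) ^ s * (y / (m.factorial : ℝ≥0∞) ^ s) := by
  have hs₀ := natCast_rpow_ne_zero m.succ_ne_zero s
  have hs_top : ((m + 1 : ℕ) : ℝ≥0∞) ^ s ≠ ⊤ :=
    ENNReal.rpow_ne_top_of_ne_zero (by positivity) (ENNReal.natCast_ne_top _)
  rw [← ENNReal.mul_div_mul_comm (.inl hs₀) (.inl hs_top),
    ← ENNReal.mul_rpow_of_ne_top (ENNReal.natCast_ne_top _) (ENNReal.natCast_ne_top _),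
    ← Nat.cast_mul, ← Nat.factorial_succ]
  gcongr

theorem rpow_div_factorial_rpow_rpow_one_div (x : ℝ≥0∞) (s : ℝ) {m : ℕ} (hm : m ≠ 0) :
    (x ^ (m : ℝ) / (m.factorial : ℝ≥0∞) ^ s) ^ ((1 : ℝ) / m) =
      (m.factorial : ℝ≥0∞) ^ (-s / m) * x := by
  have hm' : (m : ℝ) ≠ 0 := Nat.cast_ne_zero.2 hm
  rw [ENNReal.div_rpow_of_nonneg _ _ (by positivity), ← ENNReal.rpow_mul, ← ENNReal.rpow_mul,
    mul_one_div_cancel hm', ENNReal.rpow_one, mul_one_div, neg_div, ENNReal.rpow_neg,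
    ENNReal.div_eq_inv_mul]

theorem limsup_factorial_rpow_mul_le {I c : ℕ → ℝ≥0∞} (hI : ∃ᶠ m in atTop, I m ≠ ⊤)
    (h : ∀ᶠ m in atTop, I (m + 1) ^ ((m + 1 : ℕ) : ℝ) ≤ c (m + 1) * I m ^ (m : ℝ)) (s : ℝ) :
    limsup (fun m : ℕ => (m.factorial : ℝ≥0∞) ^ (-s / m) * I m) atTop ≤
      limsup (fun k : ℕ => c k / (k : ℝ≥0∞) ^ s) atTop := by
  set a : ℕ → ℝ≥0∞ := fun m => I m ^ (m : ℝ) / (m.factorial : ℝ≥0∞) ^ s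
  have hroot : (fun m : ℕ => (m.factorial : ℝ≥0∞) ^ (-s / m) * I m) =ᶠ[atTop]
      fun m => a m ^ ((1 : ℝ) / m) :=
    (eventually_ne_atTop 0).mono fun m hm =>
      (rpow_div_factorial_rpow_rpow_one_div (I m) s hm).symm
  have ha : ∃ᶠ m in atTop, a m ≠ ⊤ := hI.mono fun m hm =>
    ENNReal.div_ne_top (ENNReal.rpow_ne_top_of_nonneg m.cast_nonneg hm)
      (natCast_rpow_ne_zero m.factorial_ne_zero s)
  rw [limsup_congr hroot]
  exact limsup_rpow_one_div_le_limsup_of_succ_le_mul ha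
    (h.mono fun m hm => div_factorial_succ_rpow_le hm s)

section Integrals

variable {X : Type*} [MeasurableSpace X] {μ : Measure X} {f g : X → ℝ≥0∞}

theorem ae_ne_top_of_lintegral_rpow_ne_top {p : ℝ} (hp : 0 < p) (hf : AEMeasurable f μ)
    (h : ∫⁻ x, f x ^ p ∂μ ≠ ⊤) : ∀ᵐ x ∂μ, f x ≠ ⊤ :=
  (ae_lt_top' (hf.pow_const p) h).mono fun _ hx => ((ENNReal.rpow_lt_top_iff_of_pos hp).1 hx).ne

theorem lintegral_rpow_one_div_add_one_rpow_le (hf : AEMeasurable f μ) (hg : AEMeasurable g μ)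
    (hf₀ : ∀ᵐ x ∂μ, f x ≠ 0) (hf_top : ∀ᵐ x ∂μ, f x ≠ ⊤) {t : ℝ} (ht : 0 < t) :
    (∫⁻ x, g x ^ (1 / (t + 1)) ∂μ) ^ (t + 1) ≤
      (∫⁻ x, g x / f x ∂μ) * (∫⁻ x, f x ^ (1 / t) ∂μ) ^ t := by
  have hfactor : ∫⁻ x, g x ^ (1 / (t + 1)) ∂μ = ∫⁻ x, (g / f * f) x ^ (1 / (t + 1)) ∂μ := by
    refine lintegral_congr_ae ?_
    filter_upwards [hf₀, hf_top] with x hx₀ hx_top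
    rw [Pi.mul_apply, Pi.div_apply, ENNReal.div_mul_cancel hx₀ hx_top]
  have hholder := ENNReal.lintegral_Lp_mul_le_Lq_mul_Lr (p := 1 / (t + 1)) (q := 1) (r := 1 / t)
    (by positivity) (by rw [div_lt_one] <;> linarith)
    (by rw [one_div_one_div, one_div_one_div]; ring) μ (hg.div hf) hf
  simpa only [hfactor, one_div_one_div, div_one, ENNReal.rpow_one, Pi.div_apply] using hholder

theorem stmt_4_general {K : ℕ → X → ℝ≥0∞} {c : ℕ → ℝ≥0∞} {m₀ : ℕ} (hm₀ : 1 ≤ m₀)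
    (hK_meas : ∀ k, m₀ ≤ k → AEMeasurable (K k) μ)
    (hK_pos : ∀ k, m₀ ≤ k → ∀ᵐ x ∂μ, 0 < K k x)
    (hc_top : ∀ k, m₀ < k → c k ≠ ⊤)
    (hc : ∀ k, m₀ < k → ∫⁻ x, K k x / K (k - 1) x ∂μ ≤ c k)
    (hK₀ : ∫⁻ x, K m₀ x ^ ((1 : ℝ) / m₀) ∂μ ≠ ⊤) (s : ℝ) :
    limsup
      (fun m : ℕ => (m.factorial : ℝ≥0∞) ^ (-s / m) * ∫⁻ x, K m x ^ ((1 : ℝ) / m) ∂μ) atTop ≤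
      limsup (fun k : ℕ => c k / (k : ℝ≥0∞) ^ s) atTop := by
  set I : ℕ → ℝ≥0∞ := fun m => ∫⁻ x, K m x ^ ((1 : ℝ) / m) ∂μ with hI
  have hstep : ∀ m, m₀ ≤ m → I m ≠ ⊤ →
      I (m + 1) ^ ((m + 1 : ℕ) : ℝ) ≤ c (m + 1) * I m ^ (m : ℝ) := by
    intro m hm hIm
    have hm_pos : (0 : ℝ) < m := Nat.cast_pos.2 (hm₀.trans hm)
    have hK_top := ae_ne_top_of_lintegral_rpow_ne_top (one_div_pos.2 hm_pos) (hK_meas m hm) hIm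
    have hholder := lintegral_rpow_one_div_add_one_rpow_le (hK_meas m hm)
      (hK_meas (m + 1) (by lia)) ((hK_pos m hm).mono fun _ hx => hx.ne') hK_top hm_pos
    simp only [hI, Nat.cast_add_one]
    exact hholder.trans (by gcongr; exact hc (m + 1) (by lia))
  have hfin : ∀ m, m₀ ≤ m → I m ≠ ⊤ := by
    intro m hm
    induction m, hm using Nat.le_induction with
    | base => exact hK₀
    | succ m hm ih =>
      have hbound : c (m + 1) * I m ^ (m : ℝ) < ⊤ := ENNReal.mul_lt_top
        (hc_top (m + 1) (by lia)).lt_top (ENNReal.rpow_lt_top_of_nonneg m.cast_nonneg ih)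
      exact ((ENNReal.rpow_lt_top_iff_of_pos (by positivity)).1
        ((hstep m hm ih).trans_lt hbound)).ne
  have hlarge := eventually_ge_atTop m₀
  exact limsup_factorial_rpow_mul_le (hlarge.mono hfin).frequently
    (hlarge.mono fun m hm => hstep m hm (hfin m hm)) s

end Integrals

theorem tendsto_ofReal_div_natCast_rpow {c : ℕ → ℝ} {n : ℕ} {V : ℝ}
    (h : Tendsto (fun k : ℕ => c k / (k : ℝ) ^ n) atTop (nhds V)) :
    Tendsto (fun k : ℕ => ENNReal.ofReal (c k) / (k : ℝ≥0∞) ^ (n : ℝ)) atTop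
      (nhds (ENNReal.ofReal V)) := by
  refine (ENNReal.tendsto_ofReal h).congr' ?_
  filter_upwards [eventually_gt_atTop 0] with k hk
  rw [ENNReal.ofReal_div_of_pos (by positivity), ENNReal.ofReal_pow k.cast_nonneg,
    ENNReal.ofReal_natCast, ENNReal.rpow_natCast]

/-- Abstract form of Lemma 4.4 of Tsuji's "Dynamical construction of Kähler-Einstein
metrics": if `∫ K_k/K_{k-1} = c_k` for `k > m₀`, `∫ K_{m₀}^(1/m₀) < ∞`, and
`c_k / k^n → V > 0`, then `limsup_m (m!)^(-n/m) · ∫ K_m^(1/m) ≤ V`. -/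
theorem stmt_4 {X : Type*} [MeasurableSpace X] (μ : Measure X) (n m₀ : ℕ) (hm₀ : 1 ≤ m₀)
    (K : ℕ → X → ℝ≥0∞) (c : ℕ → ℝ) (V : ℝ) (hV : 0 < V)
    (hK_meas : ∀ k, Measurable (K k))
    (hK_pos : ∀ k, ∀ᵐ x ∂μ, 0 < K k x)
    (hK_fin : ∀ k, ∀ᵐ x ∂μ, K k x < ⊤)
    (hc_pos : ∀ k, 0 < c k)
    (hc : ∀ k, m₀ < k → ∫⁻ x, K k x / K (k - 1) x ∂μ = ENNReal.ofReal (c k))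
    (hK₀ : ∫⁻ x, (K m₀ x) ^ ((1 : ℝ) / m₀) ∂μ < ⊤)
    (hc_lim : Tendsto (fun k : ℕ => c k / (k : ℝ) ^ n) atTop (nhds V)) :
    limsup
      (fun m : ℕ =>
        (m.factorial : ℝ≥0∞) ^ (-(n : ℝ) / m) * ∫⁻ x, (K m x) ^ ((1 : ℝ) / m) ∂μ)
      atTop ≤ ENNReal.ofReal V :=
  (stmt_4_general hm₀ (fun k _ => (hK_meas k).aemeasurable) (fun k _ => hK_pos k)
    (fun _ _ => ENNReal.ofReal_ne_top) (fun k hk => (hc k hk).le) hK₀.ne n).trans_eq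
    (tendsto_ofReal_div_natCast_rpow hc_lim).limsup_eq
end
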